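/- arXiv:2103.01344 — 4 statements merged into one kernel-verified Lean document; each statement's English description precedes it below -/
import Mathlib

section
/- Let a ∈ F^n with n = K·m, let v_{K+1},...,v_{K+T} ∈ F^m be arbitrary, and let u(z) be the F^m-valued Lagrange sharing polynomial of degree at most N−1 with u(β_j) = a^{(j)} for j ∈ {1,...,K} and u(β_j) = v_j for j ∈ {K+1,...,K+T}. For θ ∈ {1,...,N}, j ∈ {1,...,K}, t ∈ {0,...,m−1} define x_{j,t}^{(θ)} = ( (1/K) Σ_{l=1}^{K} ω^{−(Kt+j−1)(l−1)} · FFT_{S'}^{-1}(u(α_θ)) · ∏_{k=1,k≠θ}^{N} (β_l − α_k)/(α_θ − α_k) )_{(Kt+j−1) mod m}. Then for all such j and t: Σ_{θ=1}^{N} x_{j,t}^{(θ)} = (FFT_S^{-1}(a))_{Kt+j−1}. -/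
/-- The index `K*t + j` (stride-`K` subsampling) as an element of `Fin n` when `n = K*m`. -/
def strideIx {n : ℕ} (K m : ℕ) (hnKm : n = K * m) (t : Fin m) (j : Fin K) : Fin n :=
  ⟨K * (t : ℕ) + (j : ℕ), by
    have ht := t.isLt
    have hj := j.isLt
    subst hnKm
    calc K * (t : ℕ) + (j : ℕ) < K * (t : ℕ) + K := by omega
      _ = K * ((t : ℕ) + 1) := by ring
      _ ≤ K * m := Nat.mul_le_mul_left K (by omega)⟩

/- A DFT of length `K * m` is a combination, with twiddle factors, of the `K` DFTs of length `m` of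
the stride-`K` parts of the data. The DFT is linear, so it commutes with Lagrange interpolation,
and interpolating the shares `u (α θ)` at `β l` returns the part `u (β l)` because `u` has degree
less than the number of shares. -/

lemma eval_lagrangeBasis_eq_prod_div {F ι : Type*} [Field F] [DecidableEq ι] (s : Finset ι)
    (γ : ι → F) (i : ι) (z : F) :
    (Lagrange.basis s γ i).eval z = ∏ k ∈ s.erase i, (z - γ k) / (γ i - γ k) := by
  simp only [Lagrange.basis, Lagrange.basisDivisor, Polynomial.eval_prod, Polynomial.eval_mul,
    Polynomial.eval_C, Polynomial.eval_sub, Polynomial.eval_X, div_eq_inv_mul]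

section LagrangeInterpolation

variable {F ι κ M N : Type*} [Field F] [Fintype ι] [DecidableEq ι] [Fintype κ] [DecidableEq κ]
  [AddCommMonoid M] [Module F M] [AddCommMonoid N] [Module F N]

/-- The value at `z` of the Lagrange interpolation polynomial through the nodes `γ` with vector
values `w`. Mathlib's `Lagrange.interpolate` covers scalar values only. -/
noncomputable def lagrangeInterpolation (γ : ι → F) (w : ι → M) (z : F) : M :=
  ∑ i, (Lagrange.basis Finset.univ γ i).eval z • w i

lemma lagrangeInterpolation_append {K T : ℕ} (γ : Fin (K + T) → F) (w : Fin K → M) (v : Fin T → M)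
    (z : F) :
    lagrangeInterpolation γ (Fin.append w v) z =
      (∑ j, (Lagrange.basis Finset.univ γ (Fin.castAdd T j)).eval z • w j) +
        ∑ j, (Lagrange.basis Finset.univ γ (Fin.natAdd K j)).eval z • v j := by
  simp only [lagrangeInterpolation, Fin.sum_univ_add, Fin.append_left, Fin.append_right]

lemma map_lagrangeInterpolation (f : M →ₗ[F] N) (γ : ι → F) (w : ι → M) (z : F) :
    f (lagrangeInterpolation γ w z) = lagrangeInterpolation γ (fun i => f (w i)) z := by
  simp only [lagrangeInterpolation, map_sum, map_smul]

lemma lagrangeInterpolation_node {γ : ι → F} (hγ : Function.Injective γ) (w : ι → M) (i : ι) :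
    lagrangeInterpolation γ w (γ i) = w i := by
  rw [lagrangeInterpolation, Fintype.sum_eq_single i,
    Lagrange.eval_basis_self hγ.injOn (Finset.mem_univ i), one_smul]
  intro k hk
  rw [Lagrange.eval_basis_of_ne hk (Finset.mem_univ i), zero_smul]

lemma lagrangeInterpolation_eval {γ : ι → F} (hγ : Function.Injective γ) {p : Polynomial F}
    (hp : p.degree < Fintype.card ι) (z : F) :
    lagrangeInterpolation γ (fun i => p.eval (γ i)) z = p.eval z := by
  conv_rhs => rw [Lagrange.eq_interpolate hγ.injOn hp]
  simp only [lagrangeInterpolation, Lagrange.interpolate_apply, Polynomial.eval_finsetSum,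
    Polynomial.eval_mul, Polynomial.eval_C, smul_eq_mul, mul_comm]

lemma lagrangeInterpolation_lagrangeInterpolation {α : κ → F} {β : ι → F}
    (hα : Function.Injective α) (hβ : Function.Injective β)
    (hcard : Fintype.card ι ≤ Fintype.card κ) (w : ι → M) (z : F) :
    lagrangeInterpolation α (fun θ => lagrangeInterpolation β w (α θ)) z =
      lagrangeInterpolation β w z := by
  have hdeg (i : ι) : (Lagrange.basis Finset.univ β i).degree < Fintype.card κ := by
    rw [Lagrange.degree_basis hβ.injOn (Finset.mem_univ i), Nat.cast_lt]
    exact (Nat.sub_lt (Finset.card_pos.2 ⟨i, Finset.mem_univ i⟩) one_pos).trans_le hcard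
  calc
    _ = ∑ i, lagrangeInterpolation α
          (fun θ => (Lagrange.basis Finset.univ β i).eval (α θ)) z • w i := by
      simp only [lagrangeInterpolation, Finset.smul_sum, Finset.sum_smul, smul_smul, smul_eq_mul]
      exact Finset.sum_comm
    _ = ∑ i, (Lagrange.basis Finset.univ β i).eval z • w i := by
      simp only [lagrangeInterpolation_eval hα (hdeg _)]

end LagrangeInterpolation

lemma sum_eq_sum_strideIx {M : Type*} [AddCommMonoid M] {n : ℕ} (K m : ℕ) (hnKm : n = K * m)
    (f : Fin n → M) : ∑ μ, f μ = ∑ l : Fin K, ∑ t : Fin m, f (strideIx K m hnKm t l) := by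
  subst hnKm
  rw [Finset.sum_comm, ← Fintype.sum_prod_type']
  refine (Fintype.sum_equiv (finProdFinEquiv.trans (finCongr (mul_comm m K))) _ _ fun p => ?_).symm
  congr 1
  ext
  simp [strideIx, add_comm]

section DFT

variable {R V : Type*} [CommSemiring R] [AddCommMonoid V] [Module R V] {n : ℕ}

/-- The unnormalized length-`n` discrete Fourier transform with kernel `ζ`, at frequency `r`.
For `ζ = ω⁻¹` it is `n` times the paper's `FFT⁻¹`. Frequencies are natural numbers, not reduced
modulo `n`. -/
def dft (ζ : R) (r : ℕ) : (Fin n → V) →ₗ[R] V :=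
  ∑ t : Fin n, ζ ^ (r * (t : ℕ)) • LinearMap.proj t

lemma dft_apply (ζ : R) (r : ℕ) (b : Fin n → V) :
    dft ζ r b = ∑ t : Fin n, ζ ^ (r * (t : ℕ)) • b t := by
  simp only [dft, LinearMap.sum_apply, LinearMap.smul_apply, LinearMap.proj_apply]

lemma dft_mod {ζ : R} (hζ : ζ ^ n = 1) (r : ℕ) (b : Fin n → V) :
    dft ζ (r % n) b = dft ζ r b := by
  simp only [dft_apply, pow_mul, ← pow_eq_pow_mod r hζ]

lemma dft_eq_sum_dft_strideIx (K m : ℕ) (hnKm : n = K * m) (ζ : R) (r : ℕ) (a : Fin n → V) :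
    dft ζ r a = ∑ l : Fin K, ζ ^ (r * (l : ℕ)) •
      dft (ζ ^ K) r (fun t : Fin m => a (strideIx K m hnKm t l)) := by
  simp only [dft_apply, sum_eq_sum_strideIx K m hnKm, strideIx, Finset.smul_sum, smul_smul,
    ← pow_mul, ← pow_add]
  refine Finset.sum_congr rfl fun l _ => Finset.sum_congr rfl fun t _ => ?_
  congr 2
  ring

end DFT

theorem share_recombination_inverse_dft_general
    {F V κ : Type*} [Field F] [AddCommMonoid V] [Module F V] [Fintype κ] [DecidableEq κ]
    {n K T m : ℕ} (hnKm : n = K * m) (hN : K + T ≤ Fintype.card κ)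
    {ζ : F} (hζ : ζ ^ n = 1) {β : Fin (K + T) → F} {α : κ → F}
    (hβ : Function.Injective β) (hα : Function.Injective α)
    (a : Fin n → V) (v : Fin T → Fin m → V) (u : F → Fin m → V)
    (hu : ∀ z, u z =
      lagrangeInterpolation β (Fin.append (fun l t => a (strideIx K m hnKm t l)) v) z)
    (r : ℕ) :
    ∑ θ, ∑ l : Fin K,
        (ζ ^ (r * (l : ℕ)) * (Lagrange.basis Finset.univ α θ).eval (β (Fin.castAdd T l))) •
          dft (ζ ^ K) (r % m) (u (α θ)) =
      dft ζ r a := by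
  have hζK : (ζ ^ K) ^ m = 1 := by rw [← pow_mul, ← hnKm, hζ]
  have hrecover (l : Fin K) : lagrangeInterpolation α (fun θ => u (α θ)) (β (Fin.castAdd T l)) =
      fun t => a (strideIx K m hnKm t l) := by
    simp only [hu]
    rw [lagrangeInterpolation_lagrangeInterpolation hα hβ (by rwa [Fintype.card_fin]),
      lagrangeInterpolation_node hβ, Fin.append_left]
  calc
    _ = ∑ l : Fin K, ζ ^ (r * (l : ℕ)) • lagrangeInterpolation α
          (fun θ => dft (ζ ^ K) r (u (α θ))) (β (Fin.castAdd T l)) := by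
      simp only [dft_mod hζK, mul_smul, lagrangeInterpolation, Finset.smul_sum]
      exact Finset.sum_comm
    _ = ∑ l : Fin K, ζ ^ (r * (l : ℕ)) •
          dft (ζ ^ K) r (fun t : Fin m => a (strideIx K m hnKm t l)) := by
      simp only [← map_lagrangeInterpolation, hrecover]
    _ = dft ζ r a := (dft_eq_sum_dft_strideIx K m hnKm ζ r a).symm

/-- Lemma 2 of the paper: the shares recombine to the inverse DFT of `a`.
Here `ω` is a primitive `n`-th root of unity, `n = K*m`,
`FFT_{S'}⁻¹(b)_r = (1/m) ∑_t ω^{-Krt} b_t`, `a^{(j)}_t = a_{Kt+j}` (zero-indexed `j`),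
`u` is the Lagrange sharing polynomial of the `a^{(j)}` with randomness `v`, and
`x θ j t` is the quantity `x_{j,t}^{(θ)}` of the paper. -/
theorem share_recombination_inverse_dft
    {F : Type*} [Field F] (n K T m : ℕ) (hn : 0 < n) (hK : 0 < K) (hT : 0 < T) (hm : 0 < m)
    (hnKm : n = K * m)
    (ω : F) (hω1 : ω ^ n = 1) (hωprim : ∀ m', 0 < m' → m' < n → ω ^ m' ≠ 1)
    (β : Fin (K + T) → F) (α : Fin (K + T) → F)
    (hβ : Function.Injective β) (hα : Function.Injective α)
    (hαβ : ∀ i j, α i ≠ β j)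
    (a : Fin n → F) (v : Fin T → Fin m → F)
    (u : F → Fin m → F)
    (hu : ∀ z, u z =
      (∑ j : Fin K, (∏ k ∈ Finset.univ.erase (Fin.castAdd T j),
          (z - β k) / (β (Fin.castAdd T j) - β k)) •
            (fun t : Fin m => a (strideIx K m hnKm t j))) +
      (∑ j : Fin T, (∏ k ∈ Finset.univ.erase (Fin.natAdd K j),
          (z - β k) / (β (Fin.natAdd K j) - β k)) • v j))
    (x : Fin (K + T) → Fin K → Fin m → F)
    (hx : ∀ (θ : Fin (K + T)) (j : Fin K) (t : Fin m), x θ j t =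
      (K : F)⁻¹ * ∑ l : Fin K,
        ω⁻¹ ^ ((K * (t : ℕ) + (j : ℕ)) * (l : ℕ)) *
        (∏ k ∈ Finset.univ.erase θ, (β (Fin.castAdd T l) - α k) / (α θ - α k)) *
        ((m : F)⁻¹ * ∑ t' : Fin m,
          ω⁻¹ ^ (K * ((K * (t : ℕ) + (j : ℕ)) % m) * (t' : ℕ)) * u (α θ) t'))
    (j : Fin K) (t : Fin m) :
    ∑ θ : Fin (K + T), x θ j t =
      (n : F)⁻¹ * ∑ μ : Fin n, ω⁻¹ ^ ((K * (t : ℕ) + (j : ℕ)) * (μ : ℕ)) * a μ := by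
  have h := share_recombination_inverse_dft_general hnKm (Fintype.card_fin _).ge
    (by rw [inv_pow, hω1, inv_one] : ω⁻¹ ^ n = 1) hβ hα a v u
    (fun z => by simp only [hu, lagrangeInterpolation_append, eval_lagrangeBasis_eq_prod_div])
    (K * t + j)
  simp only [dft_apply, eval_lagrangeBasis_eq_prod_div, smul_eq_mul, ← pow_mul, ← mul_assoc K] at h
  have hn_inv : (n : F)⁻¹ = (m : F)⁻¹ * (K : F)⁻¹ := by
    rw [hnKm, Nat.cast_mul, mul_comm, mul_inv]
  simp only [hx, mul_left_comm _ (m : F)⁻¹, ← Finset.mul_sum]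
  rw [h, hn_inv, mul_assoc]
end

section
/- (Privacy of the multiparty algorithm.) Let A : Ω → F^{m×K} be a random variable; let V : Ω → F^{m×T} be uniformly distributed on F^{m×T} and independent of A; let P ∈ F^{K×T} be constant and Q ∈ F^{T×T} constant and invertible; and set U = A·P + V·Q. Let X̃ : Ω → F^{M×K} be a random variable such that X̃ = g(A, V) for a deterministic function g and A = f(X̃) for a deterministic function f. Let Ṽ : Ω → F^{M×T} be uniformly distributed on F^{M×T} and independent of the pair (A, V), and set Ũ = X̃·P' + Ṽ·Q' for constant P' ∈ F^{K×T} and constant invertible Q' ∈ F^{T×T}. Then I[(U, Ũ) : A] = 0; i.e., the colluding observations (U, Ũ) reveal no information about A. -/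
open MeasureTheory ProbabilityTheory
open scoped ENNReal

/-- The (discrete/product) measurable structure on matrices, inherited from functions. -/
instance matrixMeasurableSpace {l k α : Type*} [MeasurableSpace α] :
    MeasurableSpace (Matrix l k α) :=
  inferInstanceAs (MeasurableSpace (l → k → α))

/-- Shannon entropy (natural log) of a finite-valued random variable. -/
noncomputable def shEntropy {Ω : Type*} [MeasurableSpace Ω] {S : Type*} [Fintype S]
    (μ : Measure Ω) (X : Ω → S) : ℝ :=
  -∑ s : S, ((μ (X ⁻¹' {s})).toReal * Real.log (μ (X ⁻¹' {s})).toReal)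

/-- Mutual information `I[X : Y] = H[X] + H[Y] - H[X, Y]`. -/
noncomputable def shMutualInfo {Ω : Type*} [MeasurableSpace Ω] {S T : Type*}
    [Fintype S] [Fintype T] (μ : Measure Ω) (X : Ω → S) (Y : Ω → T) : ℝ :=
  shEntropy μ X + shEntropy μ Y - shEntropy μ (fun ω => (X ω, Y ω))

/-! For each fixed value `a` of `A`, the map `(V, Ṽ) ↦ (U, Ũ)` is triangular: `U` is an affine
bijection of `V`, and once `V` is fixed, `Ũ` is an affine bijection of `Ṽ`. It therefore preserves
the uniform law on pairs. Since `(V, Ṽ)` is uniform and independent of `A`, the conditional law of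
`(U, Ũ)` given `A = a` is uniform for every `a`, so `(U, Ũ)` is independent of `A`. -/

section Entropy

variable {Ω S T : Type*} [MeasurableSpace Ω] {μ : Measure Ω} {X : Ω → S} {Y : Ω → T}

theorem shEntropy_eq_sum_negMulLog [Fintype S] :
    shEntropy μ X = ∑ s, Real.negMulLog (μ.real (X ⁻¹' {s})) := by
  simp only [shEntropy, Real.negMulLog, measureReal_def, neg_mul, Finset.sum_neg_distrib]

variable [MeasurableSpace S] [MeasurableSingletonClass S]
  [MeasurableSpace T] [MeasurableSingletonClass T]

theorem sum_measureReal_preimage_singleton_eq_one [IsProbabilityMeasure μ] [Fintype S]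
    (hX : AEMeasurable X μ) : ∑ s, μ.real (X ⁻¹' {s}) = 1 := by
  have := Measure.isProbabilityMeasure_map hX
  simp only [← map_measureReal_apply_of_aemeasurable hX (measurableSet_singleton _),
    sum_measureReal_singleton, Finset.coe_univ, probReal_univ]

theorem measureReal_prodMk_preimage_singleton_of_indepFun (h : IndepFun X Y μ) (s : S) (t : T) :
    μ.real ((fun ω => (X ω, Y ω)) ⁻¹' {(s, t)}) =
      μ.real (X ⁻¹' {s}) * μ.real (Y ⁻¹' {t}) := by
  have h_inter := h.measure_inter_preimage_eq_mul _ _ (measurableSet_singleton s)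
    (measurableSet_singleton t)
  simp only [← Set.singleton_prod_singleton, Set.mk_preimage_prod, measureReal_def, h_inter,
    ENNReal.toReal_mul]

variable [IsProbabilityMeasure μ] [Fintype S] [Fintype T]

theorem shEntropy_prodMk_of_indepFun (hX : AEMeasurable X μ) (hY : AEMeasurable Y μ)
    (h : IndepFun X Y μ) :
    shEntropy μ (fun ω => (X ω, Y ω)) = shEntropy μ X + shEntropy μ Y := by
  simp only [shEntropy_eq_sum_negMulLog, Fintype.sum_prod_type,
    measureReal_prodMk_preimage_singleton_of_indepFun h, Real.negMulLog_mul,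
    Finset.sum_add_distrib, ← Finset.sum_mul, ← Finset.mul_sum,
    sum_measureReal_preimage_singleton_eq_one hX, sum_measureReal_preimage_singleton_eq_one hY,
    one_mul]

theorem shMutualInfo_eq_zero_of_indepFun (hX : AEMeasurable X μ) (hY : AEMeasurable Y μ)
    (h : IndepFun X Y μ) : shMutualInfo μ X Y = 0 := by
  rw [shMutualInfo, shEntropy_prodMk_of_indepFun hX hY h, sub_self]

end Entropy

section Masking

variable {Ω α β γ β' γ' : Type*} [MeasurableSpace Ω] [MeasurableSpace α] [MeasurableSpace β]
  [MeasurableSpace γ] [MeasurableSpace β'] [MeasurableSpace γ'] {μ : Measure Ω}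
  {X : Ω → α} {N : Ω → β} {N' : Ω → β'}

theorem indepFun_prodMk_right_of_prodMk_left [IsFiniteMeasure μ] (hX : AEMeasurable X μ)
    (hN : AEMeasurable N μ) (hN' : AEMeasurable N' μ) (h : IndepFun X N μ)
    (h' : IndepFun (fun ω => (X ω, N ω)) N' μ) :
    IndepFun X (fun ω => (N ω, N' ω)) μ := by
  have lawX : HasLaw X (μ.map X) μ := ⟨hX, rfl⟩
  have lawN : HasLaw N (μ.map N) μ := ⟨hN, rfl⟩
  have lawN' : HasLaw N' (μ.map N') μ := ⟨hN', rfl⟩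
  have hNN' : IndepFun N N' μ := h'.comp measurable_snd measurable_id
  have joint := h'.hasLaw_prod (h.hasLaw_prod lawX lawN) lawN'
  exact (indepFun_iff_hasLaw_prodMk_prod lawX (hNN'.hasLaw_prod lawN lawN')).2
    ((measurePreserving_prodAssoc _ _ _).fun_comp_hasLaw joint)

variable [IsProbabilityMeasure μ] {ν : Measure β} {ρ : Measure γ} {ν' : Measure β'}
  {ρ' : Measure γ'}

theorem indepFun_apply_of_measurePreserving (hX : AEMeasurable X μ) (hN : HasLaw N ν μ)
    (h : IndepFun X N μ) {φ : α → β → γ} (hφ : Measurable φ.uncurry)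
    (hφν : ∀ x, MeasurePreserving (φ x) ν ρ) :
    IndepFun X (fun ω => φ (X ω) (N ω)) μ := by
  have := Measure.isProbabilityMeasure_map hX
  have : IsProbabilityMeasure ν := hN.isProbabilityMeasure_iff.1 ‹_›
  have : SFinite ρ := by
    obtain ⟨ω⟩ := nonempty_of_isProbabilityMeasure μ
    rw [← (hφν (X ω)).map_eq]
    infer_instance
  have lawX : HasLaw X (μ.map X) μ := ⟨hX, rfl⟩
  have skew := (MeasurePreserving.id (μ.map X)).skew_product hφ
    (ae_of_all _ fun x => (hφν x).map_eq)
  have joint := skew.fun_comp_hasLaw (h.hasLaw_prod lawX hN)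
  exact (indepFun_iff_hasLaw_prodMk_prod lawX (measurePreserving_snd.fun_comp_hasLaw joint)).2 joint

theorem indepFun_prodMk_of_measurePreserving (hX : AEMeasurable X μ) (hN : HasLaw N ν μ)
    (hN' : HasLaw N' ν' μ) (h : IndepFun X N μ) (h' : IndepFun (fun ω => (X ω, N ω)) N' μ)
    {φ : α → β → γ} (hφ : Measurable φ.uncurry) (hφν : ∀ x, MeasurePreserving (φ x) ν ρ)
    {ψ : α × β → β' → γ'} (hψ : Measurable ψ.uncurry)
    (hψν' : ∀ p, MeasurePreserving (ψ p) ν' ρ') :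
    IndepFun X (fun ω => (φ (X ω) (N ω), ψ (X ω, N ω) (N' ω))) μ := by
  have : IsProbabilityMeasure ν := hN.isProbabilityMeasure_iff.1 ‹_›
  have : IsProbabilityMeasure ν' := hN'.isProbabilityMeasure_iff.1 ‹_›
  have hNN' : IndepFun N N' μ := h'.comp measurable_snd measurable_id
  have triangular (x : α) : MeasurePreserving (fun q : β × β' => (φ x q.1, ψ (x, q.1) q.2))
      (ν.prod ν') (ρ.prod ρ') :=
    (hφν x).skew_product (g := fun n n' => ψ (x, n) n')
      (hψ.comp (by fun_prop : Measurable fun q : β × β' => ((x, q.1), q.2)))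
      (ae_of_all _ fun n => (hψν' (x, n)).map_eq)
  exact indepFun_apply_of_measurePreserving hX (hNN'.hasLaw_prod hN hN')
    (indepFun_prodMk_right_of_prodMk_left hX hN.aemeasurable hN'.aemeasurable h h')
    (φ := fun x q => (φ x q.1, ψ (x, q.1) q.2))
    ((hφ.comp (by fun_prop : Measurable fun p : α × β × β' => (p.1, p.2.1))).prodMk
      (hψ.comp (by fun_prop : Measurable fun p : α × β × β' => ((p.1, p.2.1), p.2.2))))
    triangular

end Masking

section Uniform

variable {Ω S S' : Type*} [MeasurableSpace Ω] {μ : Measure Ω}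
  [MeasurableSpace S] [MeasurableSingletonClass S]
  [MeasurableSpace S'] [MeasurableSingletonClass S']

theorem uniformOn_univ_singleton [Fintype S] (s : S) :
    uniformOn Set.univ {s} = (Fintype.card S : ℝ≥0∞)⁻¹ := by
  rw [uniformOn_univ, Measure.count_singleton, one_div]

theorem hasLaw_uniformOn_univ [Fintype S] {X : Ω → S} (hX : AEMeasurable X μ)
    (hunif : ∀ s, μ (X ⁻¹' {s}) = (Fintype.card S : ℝ≥0∞)⁻¹) :
    HasLaw X (uniformOn Set.univ) μ where
  aemeasurable := hX
  map_eq := Measure.ext_of_singleton fun s => by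
    rw [Measure.map_apply_of_aemeasurable hX (measurableSet_singleton s), hunif,
      uniformOn_univ_singleton]

theorem measurePreserving_uniformOn_univ [Finite S] [Finite S'] {f : S → S'}
    (hf : f.Bijective) :
    MeasurePreserving f (uniformOn Set.univ) (uniformOn Set.univ) where
  measurable := .of_discrete
  map_eq := Measure.ext_of_singleton fun s' => by
    have := Fintype.ofFinite S
    have := Fintype.ofFinite S'
    obtain ⟨s, rfl⟩ := hf.surjective s'
    rw [Measure.map_apply .of_discrete (measurableSet_singleton _), uniformOn_univ_singleton,
      ← Set.image_singleton, hf.injective.preimage_image, uniformOn_univ_singleton,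
      Fintype.card_of_bijective hf]

end Uniform

instance matrixMeasurableSingletonClass {l k α : Type*} [Countable l] [Countable k]
    [MeasurableSpace α] [MeasurableSingletonClass α] :
    MeasurableSingletonClass (Matrix l k α) :=
  inferInstanceAs (MeasurableSingletonClass (l → k → α))

theorem bijective_matrix_add_mul {R l n : Type*} [Ring R] [Fintype n] [DecidableEq n]
    (B : Matrix l n R) {Q : Matrix n n R} (hQ : IsUnit Q) :
    Function.Bijective fun V : Matrix l n R => B + V * Q := by
  obtain ⟨Q, rfl⟩ := hQ
  refine Function.bijective_iff_has_inverse.2 ⟨fun W => (W - B) * (↑Q⁻¹ : Matrix n n R), ?_, ?_⟩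
  · intro V
    simp only [add_sub_cancel_left, Matrix.mul_assoc, Units.mul_inv, Matrix.mul_one]
  · intro W
    simp only [Matrix.mul_assoc, Units.inv_mul, Matrix.mul_one, add_sub_cancel]

section General

variable {R l k n l' k' n' : Type*} [Ring R] [Fintype R] [Fintype l] [DecidableEq l]
  [Fintype k] [DecidableEq k] [Fintype n] [DecidableEq n] [Fintype l'] [DecidableEq l']
  [Fintype k'] [Fintype n'] [DecidableEq n'] [MeasurableSpace R] [MeasurableSingletonClass R]

theorem multiparty_privacy_general {Ω : Type*} [MeasurableSpace Ω] {μ : Measure Ω}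
    [IsProbabilityMeasure μ] {A : Ω → Matrix l k R} {V : Ω → Matrix l n R}
    {Xt : Ω → Matrix l' k' R} {Vt : Ω → Matrix l' n' R} (hA : AEMeasurable A μ)
    (hV : HasLaw V (uniformOn Set.univ) μ) (hVindep : IndepFun A V μ)
    {P : Matrix k n R} {Q : Matrix n n R} (hQ : IsUnit Q)
    {U : Ω → Matrix l n R} (hU : ∀ ω, U ω = A ω * P + V ω * Q)
    {g : Matrix l k R → Matrix l n R → Matrix l' k' R} (hXg : ∀ ω, Xt ω = g (A ω) (V ω))
    (hVt : HasLaw Vt (uniformOn Set.univ) μ) (hVtindep : IndepFun (fun ω => (A ω, V ω)) Vt μ)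
    {P' : Matrix k' n' R} {Q' : Matrix n' n' R} (hQ' : IsUnit Q')
    {Ut : Ω → Matrix l' n' R} (hUt : ∀ ω, Ut ω = Xt ω * P' + Vt ω * Q') :
    shMutualInfo μ (fun ω => (U ω, Ut ω)) A = 0 := by
  obtain rfl : Xt = fun ω => g (A ω) (V ω) := funext hXg
  let φ (a : Matrix l k R) (v : Matrix l n R) : Matrix l n R := a * P + v * Q
  let ψ (p : Matrix l k R × Matrix l n R) (v' : Matrix l' n' R) : Matrix l' n' R :=
    g p.1 p.2 * P' + v' * Q'
  obtain rfl : U = fun ω => φ (A ω) (V ω) := funext hU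
  obtain rfl : Ut = fun ω => ψ (A ω, V ω) (Vt ω) := funext hUt
  have hφ : Measurable φ.uncurry := .of_discrete
  have hψ : Measurable ψ.uncurry := .of_discrete
  have hUUt := (hφ.comp_aemeasurable (hA.prodMk hV.aemeasurable)).prodMk
    (hψ.comp_aemeasurable ((hA.prodMk hV.aemeasurable).prodMk hVt.aemeasurable))
  have hindep := indepFun_prodMk_of_measurePreserving hA hV hVt hVindep hVtindep hφ
    (fun a => measurePreserving_uniformOn_univ (bijective_matrix_add_mul (a * P) hQ)) hψ
    (fun p => measurePreserving_uniformOn_univ (bijective_matrix_add_mul (g p.1 p.2 * P') hQ'))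
  exact shMutualInfo_eq_zero_of_indepFun hUUt hA hindep.symm

end General

/-- Theorem 2 of the paper / privacy of the multiparty algorithm:
with `U = A·P + V·Q` (first round, `V` uniform and independent of `A`),
`X̃ = g(A, V)` with `A = f(X̃)`, and `Ũ = X̃·P' + Ṽ·Q'` (second round, `Ṽ` uniform
and independent of `(A, V)`), for constant `P, P'` and constant invertible `Q, Q'`,
the colluding observations `(U, Ũ)` reveal no information on `A`: `I[(U, Ũ) : A] = 0`. -/
theorem multiparty_privacy
    {Ω : Type*} [MeasurableSpace Ω] (μ : Measure Ω) [IsProbabilityMeasure μ]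
    {F : Type*} [Field F] [Fintype F] [DecidableEq F]
    [MeasurableSpace F] [MeasurableSingletonClass F]
    (m M K T : ℕ)
    (A : Ω → Matrix (Fin m) (Fin K) F) (V : Ω → Matrix (Fin m) (Fin T) F)
    (Xt : Ω → Matrix (Fin M) (Fin K) F) (Vt : Ω → Matrix (Fin M) (Fin T) F)
    (hA : Measurable A) (hV : Measurable V) (hXt : Measurable Xt) (hVt : Measurable Vt)
    (hVunif : ∀ s : Matrix (Fin m) (Fin T) F,
      μ (V ⁻¹' {s}) = ((Fintype.card (Matrix (Fin m) (Fin T) F) : ℝ≥0∞))⁻¹)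
    (hVindep : IndepFun A V μ)
    (P : Matrix (Fin K) (Fin T) F) (Q : Matrix (Fin T) (Fin T) F) (hQ : IsUnit Q)
    (U : Ω → Matrix (Fin m) (Fin T) F) (hU : ∀ ω, U ω = A ω * P + V ω * Q)
    (g : Matrix (Fin m) (Fin K) F → Matrix (Fin m) (Fin T) F → Matrix (Fin M) (Fin K) F)
    (hXg : ∀ ω, Xt ω = g (A ω) (V ω))
    (f : Matrix (Fin M) (Fin K) F → Matrix (Fin m) (Fin K) F)
    (hAf : ∀ ω, A ω = f (Xt ω))
    (hVtunif : ∀ s : Matrix (Fin M) (Fin T) F,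
      μ (Vt ⁻¹' {s}) = ((Fintype.card (Matrix (Fin M) (Fin T) F) : ℝ≥0∞))⁻¹)
    (hVtindep : IndepFun (fun ω => (A ω, V ω)) Vt μ)
    (P' : Matrix (Fin K) (Fin T) F) (Q' : Matrix (Fin T) (Fin T) F) (hQ' : IsUnit Q')
    (Ut : Ω → Matrix (Fin M) (Fin T) F) (hUt : ∀ ω, Ut ω = Xt ω * P' + Vt ω * Q') :
    shMutualInfo μ (fun ω => (U ω, Ut ω)) A = 0 :=
  multiparty_privacy_general hA.aemeasurable (hasLaw_uniformOn_univ hV.aemeasurable hVunif) hVindep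
    hQ hU hXg (hasLaw_uniformOn_univ hVt.aemeasurable hVtunif) hVtindep hQ' hUt
end

section
/- Let β_1,...,β_{K+T} ∈ F be distinct, let α_1,...,α_T ∈ F be distinct, and assume α_j ≠ β_k for all j ∈ {1,...,T} and k ∈ {1,...,K+T}. Define the T×T matrix Q by Q_{i,j} = ∏_{k=1, k≠K+i}^{K+T} (α_j − β_k)/(β_{K+i} − β_k) for i, j ∈ {1,...,T}. Then Q is invertible (its determinant is nonzero)—each row and column of Q is a nonzero scalar multiple of the corresponding row/column of the Cauchy matrix with entries 1/(α_j − β_{K+i}). -/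
/-!
Fix distinct nodes `v` and distinct nodes `w`, equally many. Interpolating at the nodes `w` the
Lagrange basis polynomials of the nodes `v` shows that the matrix of their values at `w` has as
inverse the matrix obtained by exchanging `v` and `w`.

Now let `γ` be the nodes `β` with each `β_{K+j}` replaced by `α_j`. The entries of `Q` are the
values at the `α_j` of the Lagrange basis polynomials of `β` that belong to the `β_{K+i}`. Since
these polynomials vanish at all the nodes left in place, the product of the two value matrices restricts
to their `T × T` blocks, and the block for `γ` and `β` is the inverse of `Q`.
-/

open Finset Function

section LagrangeMatrix

variable {F ι κ : Type*} [Field F] [Fintype ι] [DecidableEq ι]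

/-- The matrix of values at the points `w` of the Lagrange basis polynomials of the nodes `v`: rows
are indexed by nodes and columns by evaluation points. -/
noncomputable def lagrangeMatrix (v : ι → F) (w : κ → F) : Matrix ι κ F :=
  .of fun i j => (Lagrange.basis univ v i).eval (w j)

theorem lagrangeMatrix_apply (v : ι → F) (w : κ → F) (i : ι) (j : κ) :
    lagrangeMatrix v w i j = ∏ k ∈ univ.erase i, (w j - v k) / (v i - v k) := by
  simp [lagrangeMatrix, Lagrange.basis, Lagrange.basisDivisor, Polynomial.eval_prod,
    div_eq_inv_mul]

theorem lagrangeMatrix_apply_eq_zero {v : ι → F} {w : κ → F} {i k : ι} {j : κ} (hik : i ≠ k)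
    (hjk : w j = v k) : lagrangeMatrix v w i j = 0 := by
  simpa only [lagrangeMatrix, Matrix.of_apply, hjk] using
    Lagrange.eval_basis_of_ne hik (mem_univ k)

theorem lagrangeMatrix_self {v : ι → F} (hv : Injective v) : lagrangeMatrix v v = 1 := by
  ext i j
  obtain rfl | hij := eq_or_ne i j
  · simpa [lagrangeMatrix] using Lagrange.eval_basis_self hv.injOn (mem_univ i)
  · rw [lagrangeMatrix_apply_eq_zero hij rfl, Matrix.one_apply_ne hij]

theorem eval_eq_sum_eval_mul_eval_basis {w : ι → F} (hw : Injective w) {p : Polynomial F}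
    (hp : p.degree < Fintype.card ι) (x : F) :
    p.eval x = ∑ i, p.eval (w i) * (Lagrange.basis univ w i).eval x := by
  conv_lhs => rw [Lagrange.eq_interpolate hw.injOn hp]
  simp [Lagrange.interpolate_apply, Polynomial.eval_finsetSum]

theorem lagrangeMatrix_mul_lagrangeMatrix {v w : ι → F} (hv : Injective v) (hw : Injective w)
    (x : κ → F) : lagrangeMatrix v w * lagrangeMatrix w x = lagrangeMatrix v x := by
  ext i j
  have hdeg : (Lagrange.basis univ v i).degree < Fintype.card ι := by
    rw [Lagrange.degree_basis hv.injOn (mem_univ i), card_univ]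
    exact_mod_cast Nat.sub_lt (Fintype.card_pos_iff.mpr ⟨i⟩) one_pos
  exact (eval_eq_sum_eval_mul_eval_basis hw hdeg (x j)).symm

end LagrangeMatrix

theorem submatrix_mul_submatrix_of_eq_zero {R l m n l' m' n' : Type*}
    [NonUnitalNonAssocSemiring R] [Fintype m] [Fintype m'] {A : Matrix l m R} (B : Matrix m n R)
    {r : l' → l} {e : m' → m} (c : n' → n) (he : Injective e)
    (hA : ∀ i, ∀ k ∉ Set.range e, A (r i) k = 0) :
    A.submatrix r e * B.submatrix e c = (A * B).submatrix r c := by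
  ext i j
  simp only [Matrix.mul_apply, Matrix.submatrix_apply]
  exact Fintype.sum_of_injective e he _ _ (fun k hk => by rw [hA i k hk, zero_mul]) fun _ => rfl

theorem injective_extend {X ι κ : Type*} {e : κ → ι} {f : κ → X} {g : ι → X} (he : Injective e)
    (hf : Injective f) (hg : Set.InjOn g (Set.range e)ᶜ)
    (hfg : ∀ j, ∀ i ∉ Set.range e, f j ≠ g i) : Injective (extend e f g) := by
  intro a b hab
  by_cases ha : a ∈ Set.range e <;> by_cases hb : b ∈ Set.range e
  · obtain ⟨i, rfl⟩ := ha
    obtain ⟨j, rfl⟩ := hb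
    rw [he.extend_apply, he.extend_apply] at hab
    rw [hf hab]
  · obtain ⟨i, rfl⟩ := ha
    rw [he.extend_apply, extend_apply' _ _ _ hb] at hab
    exact absurd hab (hfg i b hb)
  · obtain ⟨j, rfl⟩ := hb
    rw [he.extend_apply, extend_apply' _ _ _ ha] at hab
    exact absurd hab.symm (hfg j a ha)
  · rw [extend_apply' _ _ _ ha, extend_apply' _ _ _ hb] at hab
    exact hg ha hb hab

theorem cauchy_like_matrix_invertible_general {F ι κ : Type*} [Field F] [Fintype ι]
    [DecidableEq ι] [Fintype κ] [DecidableEq κ] {e : κ → ι} (he : Injective e) {β : ι → F}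
    {α : κ → F} (hβ : Injective β) (hα : Injective α) (hαβ : ∀ j, ∀ k ∉ Set.range e, α j ≠ β k)
    {Q : Matrix κ κ F}
    (hQ : ∀ i j, Q i j = ∏ k ∈ univ.erase (e i), (α j - β k) / (β (e i) - β k)) :
    IsUnit Q := by
  let γ : ι → F := extend e α β
  have hγ : Injective γ := injective_extend he hα hβ.injOn hαβ
  have hγe (j : κ) : γ (e j) = α j := he.extend_apply α β j
  have hQγ : Q = (lagrangeMatrix β γ).submatrix e e := by
    ext i j
    rw [hQ, Matrix.submatrix_apply, lagrangeMatrix_apply, hγe]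
  have hvanish (i : κ) (k : ι) (hk : k ∉ Set.range e) : lagrangeMatrix β γ (e i) k = 0 :=
    lagrangeMatrix_apply_eq_zero (fun hik => hk ⟨i, hik⟩) (extend_apply' α β k hk)
  refine .of_mul_eq_one ((lagrangeMatrix γ β).submatrix e e) ?_
  rw [hQγ, submatrix_mul_submatrix_of_eq_zero _ _ he hvanish,
    lagrangeMatrix_mul_lagrangeMatrix hβ hγ, lagrangeMatrix_self hβ, Matrix.submatrix_one e he]

/-- the `T × T` matrix `Q` with entries
`Q_{i,j} = ∏_{k ≠ K+i} (α_j − β_k)/(β_{K+i} − β_k)` (a row/column rescaling of a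
Cauchy matrix) is invertible, i.e. its determinant is nonzero. -/
theorem cauchy_like_matrix_invertible
    {F : Type*} [Field F] (K T : ℕ) (hK : 0 < K) (hT : 0 < T)
    (β : Fin (K + T) → F) (α : Fin T → F)
    (hβ : Function.Injective β) (hα : Function.Injective α)
    (hαβ : ∀ (j : Fin T) (k : Fin (K + T)), α j ≠ β k)
    (Q : Matrix (Fin T) (Fin T) F)
    (hQ : ∀ i j, Q i j = ∏ k ∈ Finset.univ.erase (Fin.natAdd K i),
      (α j - β k) / (β (Fin.natAdd K i) - β k)) :
    IsUnit Q ∧ Q.det ≠ 0 := by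
  have hunit : IsUnit Q := cauchy_like_matrix_invertible_general (Fin.natAdd_injective T K) hβ hα
    (fun j k _ => hαβ j k) hQ
  exact ⟨hunit, (Q.isUnit_iff_isUnit_det.mp hunit).ne_zero⟩
end

section
/- (Correctness of the multiparty FFT_D^{-1} algorithm.) Let a ∈ F^n with n = K·m, let v_{K+1},...,v_{K+T} ∈ F^m be arbitrary, and let u(z) be the F^m-valued Lagrange sharing polynomial with u(β_j) = a^{(j)} for j ∈ {1,...,K} and u(β_j) = v_j for j ∈ {K+1,...,K+T}. Define u''(z) = Σ_{γ=1}^{N} FFT_{S'}^{-1}(u(α_γ)) · ∏_{k=1,k≠γ}^{N} (z − α_k)/(α_γ − α_k). Then for every i ∈ {0,...,n−1}: η^{−i} · (1/K) · Σ_{j=1}^{K} ω^{−i(j−1)} · (u''(β_j))_{i mod m} = (FFT_D^{-1}(a))_i = η^{−i}·(1/n) Σ_{μ=0}^{n−1} ω^{−iμ} a_μ. -/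
/-!
The inverse DFT is linear, so it commutes with Lagrange interpolation of vectors: applied share by
share at the points `α γ`, it yields samples of the interpolant through the transformed data. That
interpolant has degree less than the number of nodes `β`, so it is recovered from its values at the
`α γ`, and at `β j` it takes the inverse DFT of `a^{(j)}` as value. One decimation-in-time
(Cooley–Tukey) step then assembles the inverse DFT of `a` from those of its stride-`K` parts.
-/

section VectorInterpolation

open Polynomial

theorem eval_lagrange_basis_eq_prod_div {F ι : Type*} [Field F] [DecidableEq ι]
    (s : Finset ι) (x : ι → F) (i : ι) (z : F) :
    (Lagrange.basis s x i).eval z = ∏ k ∈ s.erase i, (z - x k) / (x i - x k) := by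
  simp [Lagrange.basis, Lagrange.basisDivisor, eval_prod, div_eq_inv_mul]

variable {F ι κ M M' : Type*} [Field F] [Fintype ι] [DecidableEq ι] [Fintype κ] [DecidableEq κ]
  [AddCommGroup M] [Module F M] [AddCommGroup M'] [Module F M']

/-- The Lagrange interpolant through the points `(x i, w i)` with values in an `F`-module, the
module-valued counterpart of `Lagrange.interpolate`. It is encoded as a function of the evaluation
point `z`, not as a polynomial with coefficients in `M`. -/
noncomputable def vectorInterpolant (x : ι → F) (w : ι → M) (z : F) : M :=
  ∑ i, (Lagrange.basis Finset.univ x i).eval z • w i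

theorem vectorInterpolant_eq_sum_prod_div (x : ι → F) (w : ι → M) (z : F) :
    vectorInterpolant x w z =
      ∑ i, (∏ k ∈ Finset.univ.erase i, (z - x k) / (x i - x k)) • w i := by
  simp only [vectorInterpolant, eval_lagrange_basis_eq_prod_div]

theorem vectorInterpolant_append {p q : ℕ} (x : Fin (p + q) → F) (f : Fin p → M)
    (g : Fin q → M) (z : F) :
    vectorInterpolant x (Fin.append f g) z =
      (∑ j : Fin p, (∏ k ∈ Finset.univ.erase (Fin.castAdd q j),
        (z - x k) / (x (Fin.castAdd q j) - x k)) • f j) +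
      ∑ j : Fin q, (∏ k ∈ Finset.univ.erase (Fin.natAdd p j),
        (z - x k) / (x (Fin.natAdd p j) - x k)) • g j := by
  simp only [vectorInterpolant_eq_sum_prod_div, Fin.sum_univ_add, Fin.append_left,
    Fin.append_right]

theorem vectorInterpolant_apply_node {x : ι → F} (hx : Function.Injective x) (w : ι → M) (i : ι) :
    vectorInterpolant x w (x i) = w i := by
  rw [vectorInterpolant, Finset.sum_eq_single i]
  · rw [Lagrange.eval_basis_self hx.injOn (Finset.mem_univ i), one_smul]
  · intro j _ hji
    rw [Lagrange.eval_basis_of_ne hji (Finset.mem_univ i), zero_smul]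
  · exact fun hi => absurd (Finset.mem_univ i) hi

theorem vectorInterpolant_map (L : M →ₗ[F] M') (x : ι → F) (w : ι → M) (z : F) :
    vectorInterpolant x (fun i => L (w i)) z = L (vectorInterpolant x w z) := by
  simp only [vectorInterpolant, map_sum, map_smul]

theorem vectorInterpolant_eval {y : κ → F} (hy : Function.Injective y) {p : F[X]}
    (hp : p.degree < Fintype.card κ) (z : F) :
    vectorInterpolant y (fun k => p.eval (y k)) z = p.eval z := by
  conv_rhs => rw [Lagrange.eq_interpolate (s := Finset.univ) hy.injOn hp]
  simp only [vectorInterpolant, Lagrange.interpolate_apply, eval_finsetSum, eval_mul, eval_C,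
    smul_eq_mul, mul_comm]

theorem degree_lagrange_basis_lt {x : ι → F} (hx : Function.Injective x) (i : ι) :
    (Lagrange.basis Finset.univ x i).degree < Fintype.card ι := by
  rw [Lagrange.degree_basis hx.injOn (Finset.mem_univ i), Finset.card_univ]
  exact_mod_cast Nat.sub_lt (Fintype.card_pos_iff.mpr ⟨i⟩) one_pos

theorem vectorInterpolant_resample {x : ι → F} {y : κ → F} (hx : Function.Injective x)
    (hy : Function.Injective y) (hcard : Fintype.card ι ≤ Fintype.card κ) (w : ι → M) (z : F) :
    vectorInterpolant y (fun k => vectorInterpolant x w (y k)) z = vectorInterpolant x w z := by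
  have basis_resample (i : ι) :
      ∑ k, (Lagrange.basis Finset.univ y k).eval z * (Lagrange.basis Finset.univ x i).eval (y k) =
        (Lagrange.basis Finset.univ x i).eval z :=
    vectorInterpolant_eval hy
      ((degree_lagrange_basis_lt hx i).trans_le (by exact_mod_cast hcard)) z
  simp only [vectorInterpolant, Finset.smul_sum, smul_smul]
  rw [Finset.sum_comm]
  simp only [← Finset.sum_smul, basis_resample]

theorem vectorInterpolant_map_resample_apply_node {x : ι → F} {y : κ → F}
    (hx : Function.Injective x) (hy : Function.Injective y)
    (hcard : Fintype.card ι ≤ Fintype.card κ) (L : M →ₗ[F] M') (w : ι → M) (i : ι) :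
    vectorInterpolant y (fun k => L (vectorInterpolant x w (y k))) (x i) = L (w i) := by
  rw [vectorInterpolant_map, vectorInterpolant_resample hx hy hcard,
    vectorInterpolant_apply_node hx]

end VectorInterpolation

section InverseDFT

theorem sum_strideIx {M : Type*} [AddCommMonoid M] {n : ℕ} (K m : ℕ) (hnKm : n = K * m)
    (f : Fin n → M) :
    ∑ j : Fin K, ∑ t : Fin m, f (strideIx K m hnKm t j) = ∑ μ, f μ := by
  rw [Finset.sum_comm, ← Fintype.sum_prod_type']
  refine Fintype.sum_equiv
    (finProdFinEquiv.trans (finCongr ((mul_comm m K).trans hnKm.symm))) _ _ fun p => ?_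
  congr 1
  ext
  simp [strideIx, add_comm]

variable {F : Type*} [Field F]

/-- The inverse discrete Fourier transform of length `m` with respect to an `m`-th root of unity
`ζ`, written `FFT_{S'}⁻¹` in the paper for `ζ = ω ^ K` and `S' = {1, ζ, …, ζ ^ (m - 1)}`. It
inverts the DFT when `ζ` is primitive; if `(m : F) = 0`, the factor `(m : F)⁻¹` makes it zero. -/
def inverseDFT (m : ℕ) (ζ : F) : (Fin m → F) →ₗ[F] (Fin m → F) :=
  Matrix.mulVecLin (Matrix.of fun r t : Fin m => (m : F)⁻¹ * ζ⁻¹ ^ ((r : ℕ) * (t : ℕ)))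

theorem inverseDFT_apply {m : ℕ} (ζ : F) (b : Fin m → F) (r : Fin m) :
    inverseDFT m ζ b r = (m : F)⁻¹ * ∑ t : Fin m, ζ⁻¹ ^ ((r : ℕ) * (t : ℕ)) * b t := by
  simp [inverseDFT, Matrix.mulVec, dotProduct, Finset.mul_sum, mul_assoc]

theorem inverseDFT_pow_apply {m : ℕ} (K : ℕ) (ω : F) (b : Fin m → F) (r : Fin m) :
    inverseDFT m (ω ^ K) b r =
      (m : F)⁻¹ * ∑ t : Fin m, ω⁻¹ ^ (K * (r : ℕ) * (t : ℕ)) * b t := by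
  simp only [inverseDFT_apply, ← inv_pow, ← pow_mul, mul_assoc]

theorem pow_mul_pow_mod_eq_pow_mul_strideIx {R : Type*} [Monoid R] {x : R} {n K m : ℕ}
    (hnKm : n = K * m) (hx : x ^ n = 1) (i : ℕ) (t : Fin m) (j : Fin K) :
    x ^ (i * (j : ℕ)) * x ^ (K * (i % m) * (t : ℕ)) =
      x ^ (i * (strideIx K m hnKm t j : ℕ)) := by
  have hxK : (x ^ K) ^ m = 1 := by rw [← pow_mul, ← hnKm, hx]
  have reduce_mod : x ^ (K * (i % m)) = x ^ (K * i) := by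
    rw [pow_mul, pow_mul, ← pow_eq_pow_mod i hxK]
  rw [pow_mul x (K * (i % m)), reduce_mod, ← pow_mul, ← pow_add]
  congr 1
  simp only [strideIx]
  ring

theorem inverseDFT_eq_sum_inverseDFT_strideIx {n K m : ℕ} (hnKm : n = K * m) (hm : 0 < m)
    {ω : F} (hω : ω ^ n = 1) (a : Fin n → F) (i : Fin n) :
    inverseDFT n ω a i = (K : F)⁻¹ * ∑ j : Fin K, ω⁻¹ ^ ((i : ℕ) * (j : ℕ)) *
      inverseDFT m (ω ^ K) (fun t => a (strideIx K m hnKm t j))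
        ⟨(i : ℕ) % m, Nat.mod_lt _ hm⟩ := by
  have hω_inv : ω⁻¹ ^ n = 1 := by rw [inv_pow, hω, inv_one]
  have hn_inv : (n : F)⁻¹ = (K : F)⁻¹ * (m : F)⁻¹ := by rw [hnKm, Nat.cast_mul, mul_inv]
  rw [inverseDFT_apply, ← sum_strideIx K m hnKm, hn_inv, mul_assoc, Finset.mul_sum]
  simp only [inverseDFT_pow_apply, mul_left_comm _ (m : F)⁻¹, Finset.mul_sum, ← mul_assoc,
    ← pow_mul_pow_mod_eq_pow_mul_strideIx hnKm hω_inv]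

end InverseDFT

theorem multiparty_inverse_fft_D_correctness_general
    {F σ κ : Type*} [Field F] [Fintype σ] [DecidableEq σ] [Fintype κ] [DecidableEq κ]
    {n K m : ℕ} (hm : 0 < m) (hnKm : n = K * m) {ω : F} (hω : IsPrimitiveRoot ω n)
    {β : σ → F} {α : κ → F} (hβ : Function.Injective β) (hα : Function.Injective α)
    (hcard : Fintype.card σ ≤ Fintype.card κ) (a : Fin n → F) (w : σ → Fin m → F)
    (slot : Fin K → σ) (hw : ∀ j, w (slot j) = fun t => a (strideIx K m hnKm t j)) (i : Fin n) :
    (K : F)⁻¹ * ∑ j : Fin K, ω⁻¹ ^ ((i : ℕ) * (j : ℕ)) *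
        vectorInterpolant α (fun γ => inverseDFT m (ω ^ K) (vectorInterpolant β w (α γ)))
          (β (slot j)) ⟨(i : ℕ) % m, Nat.mod_lt _ hm⟩ =
      inverseDFT n ω a i := by
  simp only [vectorInterpolant_map_resample_apply_node hβ hα hcard, hw]
  exact (inverseDFT_eq_sum_inverseDFT_strideIx hnKm hm hω.pow_eq_one a i).symm

/-- correctness of the multiparty `FFT_D⁻¹` algorithm, Algorithm 5:
with `u` the Lagrange sharing polynomial of the stride-`K` partitions `a^{(j)}` of `a`
(randomness `v`), and `u''(z) = ∑_γ FFT_{S'}⁻¹(u(α_γ)) ∏_{k≠γ} (z−α_k)/(α_γ−α_k)`,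
the prover's output `η^{−i}·(1/K)·∑_{j<K} ω^{−ij} (u''(β_j))_{i mod m}` equals
`(FFT_D⁻¹(a))_i = η^{−i}·(1/n) ∑_μ ω^{−iμ} a_μ`. -/
theorem multiparty_inverse_fft_D_correctness
    {F : Type*} [Field F] (n K T m : ℕ) (hn : 0 < n) (hK : 0 < K) (hT : 0 < T) (hm : 0 < m)
    (hnKm : n = K * m)
    (ω : F) (hω1 : ω ^ n = 1) (hωprim : ∀ m', 0 < m' → m' < n → ω ^ m' ≠ 1)
    (η : F) (hη0 : η ≠ 0) (hηS : ∀ i : Fin n, η ≠ ω ^ (i : ℕ))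
    (β : Fin (K + T) → F) (α : Fin (K + T) → F)
    (hβ : Function.Injective β) (hα : Function.Injective α)
    (hαβ : ∀ i j, α i ≠ β j)
    (a : Fin n → F) (v : Fin T → Fin m → F)
    (u : F → Fin m → F)
    (hu : ∀ z, u z =
      (∑ j : Fin K, (∏ k ∈ Finset.univ.erase (Fin.castAdd T j),
          (z - β k) / (β (Fin.castAdd T j) - β k)) •
            (fun t : Fin m => a (strideIx K m hnKm t j))) +
      (∑ j : Fin T, (∏ k ∈ Finset.univ.erase (Fin.natAdd K j),
          (z - β k) / (β (Fin.natAdd K j) - β k)) • v j))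
    (u'' : F → Fin m → F)
    (hu'' : ∀ z, u'' z = ∑ γ : Fin (K + T),
      (∏ k ∈ Finset.univ.erase γ, (z - α k) / (α γ - α k)) •
        (fun r : Fin m => (m : F)⁻¹ * ∑ t : Fin m, ω⁻¹ ^ (K * (r : ℕ) * (t : ℕ)) * u (α γ) t))
    (i : Fin n) :
    η⁻¹ ^ (i : ℕ) * ((K : F)⁻¹ * ∑ j : Fin K,
        ω⁻¹ ^ ((i : ℕ) * (j : ℕ)) *
          u'' (β (Fin.castAdd T j)) ⟨(i : ℕ) % m, Nat.mod_lt _ hm⟩) =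
    η⁻¹ ^ (i : ℕ) * ((n : F)⁻¹ * ∑ μ : Fin n, ω⁻¹ ^ ((i : ℕ) * (μ : ℕ)) * a μ) := by
  simp only [hu'', hu, ← vectorInterpolant_append, ← inverseDFT_pow_apply,
    ← vectorInterpolant_eq_sum_prod_div]
  rw [← inverseDFT_apply, multiparty_inverse_fft_D_correctness_general hm hnKm
    (IsPrimitiveRoot.mk_of_lt ω hn hω1 hωprim) hβ hα le_rfl a _ (Fin.castAdd T)
    (Fin.append_left _ _) i]
end
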